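/- Let f : {0,…,n} → ℤ and g : {0,…,m} → ℤ take values in {−U,…,U} for some integer U ≥ 0, let W > 2U be an integer, and let N > max(n, m). Extend f to f' : {0,…,N−1} → ℤ by f'(n + j) = 2jW for 1 ≤ j ≤ N−1−n, and extend g to g' : {0,…,N−1} → ℤ by g'(m + j) = 2jW for 1 ≤ j ≤ N−1−m. Then for every k ∈ {0,…,n+m}, the min-plus convolution of f' and g' at k equals the min-plus convolution of f and g at k. -/

import Mathlib

/-- Padding the input functions with sufficiently steep values does not
change the min-plus convolution on `{0,…,n+m}`. -/
theorem minPlusConv_padding (n m N : ℕ) (U W : ℤ) (hU : 0 ≤ U) (hW : 2 * U < W)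
    (hN : max n m < N)
    (f g f' g' h h' : ℕ → ℤ)
    (hfU : ∀ i ≤ n, -U ≤ f i ∧ f i ≤ U) (hgU : ∀ j ≤ m, -U ≤ g j ∧ g j ≤ U)
    (hf'eq : ∀ i ≤ n, f' i = f i)
    (hf'pad : ∀ j : ℕ, 1 ≤ j → n + j ≤ N - 1 → f' (n + j) = 2 * (j : ℤ) * W)
    (hg'eq : ∀ j ≤ m, g' j = g j)
    (hg'pad : ∀ j : ℕ, 1 ≤ j → m + j ≤ N - 1 → g' (m + j) = 2 * (j : ℤ) * W)
    (hh : ∀ k ≤ n + m,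
      IsLeast {v : ℤ | ∃ i ≤ n, ∃ j ≤ m, i + j = k ∧ v = f i + g j} (h k))
    (hh' : ∀ k ≤ (N - 1) + (N - 1),
      IsLeast {v : ℤ | ∃ i ≤ N - 1, ∃ j ≤ N - 1, i + j = k ∧ v = f' i + g' j} (h' k)) :
    ∀ k ≤ n + m, h' k = h k := by
  intro k hk
  have hn : n ≤ N - 1 := by omega
  have hm : m ≤ N - 1 := by omega
  have hW0 : 0 < W := by linarith
  obtain ⟨⟨i, hi, j, hj, hij, hv⟩, hmin⟩ := hh k hk
  obtain ⟨⟨i', hi', j', hj', hij', hv'⟩, hmin'⟩ := hh' k (by omega)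
  have hle : h' k ≤ h k := by
    apply hmin'
    exact ⟨i, by omega, j, by omega, hij, by rw [hv, hf'eq i hi, hg'eq j hj]⟩
  have hfi := hfU i hi
  have hgj := hgU j hj
  apply le_antisymm hle
  by_cases h1 : i' ≤ n
  · by_cases h2 : j' ≤ m
    · apply hmin
      exact ⟨i', h1, j', h2, hij', by rw [hv', hf'eq i' h1, hg'eq j' h2]⟩
    · obtain ⟨d, rfl⟩ : ∃ d, j' = m + d := ⟨j' - m, by omega⟩
      have hd : 1 ≤ d := by omega
      have e := hg'pad d hd hj'
      have e2 := hf'eq i' h1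
      have e3 := hfU i' h1
      have hd' : (1 : ℤ) ≤ d := by exact_mod_cast hd
      nlinarith [mul_le_mul_of_nonneg_right hd' hW0.le]
  · obtain ⟨d, rfl⟩ : ∃ d, i' = n + d := ⟨i' - n, by omega⟩
    have h2 : j' ≤ m := by omega
    have hd : 1 ≤ d := by omega
    have e := hf'pad d hd hi'
    have e2 := hg'eq j' h2
    have e3 := hgU j' h2
    have hd' : (1 : ℤ) ≤ d := by exact_mod_cast hd
    nlinarith [mul_le_mul_of_nonneg_right hd' hW0.le]
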